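/- In the tensor product model of F_γ ⊗ D⁺_j (see context), assume j is a half-integer with j ≥ −½ and j > γ − 1. Then for every μ ∈ M_γ and every natural number n ≥ 1, (J₊)ⁿ ψ_(μ) ≠ 0, where ψ_(μ) := Σ_{ν=−γ}^{μ} (−1)^{γ+ν} · (∏_{σ=−γ}^{ν−1} Γ₊(j, j+μ−σ)/Γ₊(γ,σ)) · e_ν ⊗ f_{j+1+μ−ν}; i.e. the repeated action of the raising operator J₊ on each lowest weight vector never vanishes. -/

import Mathlib

noncomputable section

/-- The principal complex square root, `√z = z^{1/2}` (so `(√z)² = z` for all `z ∈ ℂ`). -/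
def csqrt (z : ℂ) : ℂ := z ^ (1 / 2 : ℂ)

/-- `Γ₊(x,y) = i √(x-y) √(x+y+1)`. -/
def Gp (x y : ℂ) : ℂ := Complex.I * csqrt (x - y) * csqrt (x + y + 1)

/-- `Γ₋(x,y) = i √(x+y) √(x-y+1)`. -/
def Gm (x y : ℂ) : ℂ := Complex.I * csqrt (x + y) * csqrt (x - y + 1)

/-- The carrier of the coupling `F_γ ⊗ D⁺_j` with `2γ = N`: the basis vector
`e_ν ⊗ f_m` with `ν = -γ + a` (`a ≤ N`) and `m = j + 1 + b` is indexed by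
`(a, b) : Fin (N+1) × ℕ`. -/
abbrev Wmod (N : ℕ) := (Fin (N + 1) × ℕ) →₀ ℂ

/-- `γ = N/2` as a complex number. -/
def gammaC (N : ℕ) : ℂ := (N : ℂ) / 2

/-- `ν = -γ + a`. -/
def nuC (N : ℕ) (a : Fin (N + 1)) : ℂ := -gammaC N + (a : ℕ)

/-- `m = j + 1 + b`. -/
def mC (j : ℂ) (b : ℕ) : ℂ := j + 1 + (b : ℕ)

/-- `J₀ (e_ν ⊗ f_m) = (ν + m) e_ν ⊗ f_m`. -/
def J0op (N : ℕ) (j : ℂ) : Wmod N →ₗ[ℂ] Wmod N :=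
  Finsupp.lsum ℂ fun ab => (nuC N ab.1 + mC j ab.2) • Finsupp.lsingle ab

/-- `J₊ (e_ν ⊗ f_m) = Γ₊(γ,ν) e_{ν+1} ⊗ f_m + Γ₊(j,m) e_ν ⊗ f_{m+1}` (terms with
vanishing coefficient drop out, so the wrap-around `Fin` index is harmless). -/
def Jpop (N : ℕ) (j : ℂ) : Wmod N →ₗ[ℂ] Wmod N :=
  Finsupp.lsum ℂ fun ab =>
    Gp (gammaC N) (nuC N ab.1) • Finsupp.lsingle (ab.1 + 1, ab.2) +
    Gp j (mC j ab.2) • Finsupp.lsingle (ab.1, ab.2 + 1)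

/-- `J₋ (e_ν ⊗ f_m) = Γ₋(γ,ν) e_{ν-1} ⊗ f_m + Γ₋(j,m) e_ν ⊗ f_{m-1}` (terms with
vanishing coefficient drop out, so the truncated index is harmless). -/
def Jmop (N : ℕ) (j : ℂ) : Wmod N →ₗ[ℂ] Wmod N :=
  Finsupp.lsum ℂ fun ab =>
    Gm (gammaC N) (nuC N ab.1) • Finsupp.lsingle (ab.1 - 1, ab.2) +
    Gm j (mC j ab.2) • Finsupp.lsingle (ab.1, ab.2 - 1)

/-- The Casimir operator `Q = -J₀(J₀+1) + J₋J₊`. -/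
def Qop (N : ℕ) (j : ℂ) : Wmod N →ₗ[ℂ] Wmod N :=
  -(J0op N j ∘ₗ (J0op N j + LinearMap.id)) + Jmop N j ∘ₗ Jpop N j

/-- The vector `ψ_(μ)`, `μ = -γ + u`:
`ψ_(μ) = ∑_{ν=-γ}^{μ} (-1)^{γ+ν} (∏_{σ=-γ}^{ν-1} Γ₊(j, j+μ-σ)/Γ₊(γ,σ)) e_ν ⊗ f_{j+1+μ-ν}`. -/
def psiVec (N : ℕ) (j : ℂ) (u : ℕ) (hu : u ≤ N) : Wmod N :=
  ∑ a : Fin (u + 1),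
    ((-1 : ℂ) ^ (a : ℕ) *
      ∏ s ∈ Finset.range (a : ℕ),
        Gp j (j + (u : ℂ) - (s : ℂ)) / Gp (gammaC N) (-gammaC N + (s : ℂ))) •
      Finsupp.single (Fin.castLE (Nat.succ_le_succ hu) a, u - (a : ℕ)) (1 : ℂ)

/-!
Only the components of vectors along `e_{-γ}` matter. Raising the first factor never produces
`e_{-γ}`, so on these components `J₊` acts by `f_m ↦ Γ₊(j,m) f_{m+1}` alone. Since `ψ_(μ)` has
coefficient `1` at `e_{-γ} ⊗ f_{j+1+γ+μ}`, the coefficient of `(J₊)ⁿ ψ_(μ)` at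
`e_{-γ} ⊗ f_{j+1+γ+μ+n}` is the product of the `n` consecutive values of `Γ₊(j, ·)` from
`m = j+1+γ+μ` on. Each factor `Γ₊(j, j+1+b)` vanishes only if `2j+2+b = 0`.
-/

lemma csqrt_eq_zero_iff {z : ℂ} : csqrt z = 0 ↔ z = 0 := by
  simp [csqrt, Complex.cpow_eq_zero_iff]

lemma Gp_eq_zero_iff {x y : ℂ} : Gp x y = 0 ↔ x = y ∨ x + y + 1 = 0 := by
  simp [Gp, csqrt_eq_zero_iff, sub_eq_zero]

lemma nuC_last (N : ℕ) : nuC N (Fin.last N) = gammaC N := by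
  rw [nuC, Fin.val_last, gammaC]
  ring

lemma Gp_gammaC_nuC_last (N : ℕ) : Gp (gammaC N) (nuC N (Fin.last N)) = 0 :=
  Gp_eq_zero_iff.2 (.inl (nuC_last N).symm)

lemma self_ne_mC (j : ℂ) (b : ℕ) : j ≠ mC j b := by
  rw [mC, add_assoc, ne_eq, left_eq_add, add_comm]
  exact Nat.cast_add_one_ne_zero b

lemma Gp_mC_eq_zero_iff {j : ℂ} {b : ℕ} : Gp j (mC j b) = 0 ↔ 2 * j + 2 + b = 0 := by
  have hadd : j + mC j b + 1 = 2 * j + 2 + b := by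
    rw [mC]
    ring
  rw [Gp_eq_zero_iff, or_iff_right (self_ne_mC j b), hadd]

lemma Jpop_single (N : ℕ) (j : ℂ) (a : Fin (N + 1)) (b : ℕ) (c : ℂ) :
    Jpop N j (Finsupp.single (a, b) c) =
      Finsupp.single (a + 1, b) (Gp (gammaC N) (nuC N a) * c) +
        Finsupp.single (a, b + 1) (Gp j (mC j b) * c) := by
  simp [Jpop]

lemma Jpop_apply_zero_succ (N : ℕ) (j : ℂ) (w : Wmod N) (b : ℕ) :
    Jpop N j w (0, b + 1) = Gp j (mC j b) * w (0, b) := by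
  induction w using Finsupp.induction_linear with
  | zero => simp
  | add v w hv hw => simp only [map_add, Finsupp.add_apply, hv, hw, mul_add]
  | single p c =>
    obtain ⟨a, b'⟩ := p
    -- In `Fin (N + 1)`, `a + 1` is `0` only at the top weight of `F_γ`, which `J₊` annihilates.
    have hwrap : Finsupp.single (a + 1, b') (Gp (gammaC N) (nuC N a) * c) (0, b + 1) = 0 := by
      by_cases ha : a + 1 = 0
      · have hlast : a = Fin.last N := add_right_cancel (ha.trans (Fin.last_add_one N).symm)
        rw [hlast, Gp_gammaC_nuC_last, zero_mul, Finsupp.single_zero, Finsupp.zero_apply]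
      · exact Finsupp.single_eq_of_ne fun h => ha (congrArg Prod.fst h).symm
    rw [Jpop_single, Finsupp.add_apply, hwrap, zero_add]
    simp only [Finsupp.single_apply, Prod.mk.injEq, add_left_inj, mul_ite, mul_zero]
    split_ifs with h
    · rw [h.2]
    · rfl

lemma Jpop_pow_apply_zero_add (N : ℕ) (j : ℂ) (w : Wmod N) (b n : ℕ) :
    ((Jpop N j : Module.End ℂ (Wmod N)) ^ n) w (0, b + n) =
      (∏ k ∈ Finset.range n, Gp j (mC j (b + k))) * w (0, b) := by
  induction n with
  | zero => simp
  | succ n ih =>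
    rw [pow_succ', Module.End.mul_apply, ← add_assoc, Jpop_apply_zero_succ, ih,
      Finset.prod_range_succ]
    ring

lemma psiVec_apply_zero (N : ℕ) (j : ℂ) (u : ℕ) (hu : u ≤ N) : psiVec N j u hu (0, u) = 1 := by
  simp [psiVec, Fin.sum_univ_succ, Fin.ext_iff]

theorem repeated_raising_nonzero_general (N : ℕ) (j : ℂ) (u : ℕ) (hu : u ≤ N) (n : ℕ)
    (hj : ∀ k < n, 2 * j + 2 + (u + k : ℕ) ≠ 0) :
    ((Jpop N j : Module.End ℂ (Wmod N)) ^ n) (psiVec N j u hu) ≠ 0 := by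
  intro hzero
  have hcoeff := Jpop_pow_apply_zero_add N j (psiVec N j u hu) u n
  rw [hzero, Finsupp.zero_apply, psiVec_apply_zero, mul_one] at hcoeff
  refine Finset.prod_ne_zero_iff.2 (fun k hk => ?_) hcoeff.symm
  exact Gp_mC_eq_zero_iff.not.2 (hj k (Finset.mem_range.1 hk))

/-- In `F_γ ⊗ D⁺_j` with `j` a half-integer, `j ≥ -½` and `j > γ - 1`, the repeated
action of the raising operator `J₊` on each lowest weight vector `ψ_(μ)` never
vanishes. -/
theorem repeated_raising_nonzero (N : ℕ) (hN : 1 ≤ N) (jr : ℚ)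
    (hhalf : ∃ k : ℤ, (k : ℚ) = 2 * jr) (hge : -(1 / 2) ≤ jr)
    (hgt : (N : ℚ) / 2 - 1 < jr)
    (u : ℕ) (hu : u ≤ N) (nn : ℕ) (hnn : 1 ≤ nn) :
    ((Jpop N (jr : ℂ) : Module.End ℂ (Wmod N)) ^ nn) (psiVec N (jr : ℂ) u hu) ≠ 0 := by
  refine repeated_raising_nonzero_general N jr u hu nn fun k _ => ?_
  have hpos : 0 < 2 * jr + 2 + (u + k : ℕ) := by linarith [(u + k).cast_nonneg (α := ℚ)]
  exact_mod_cast hpos.ne'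

end
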